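/- For every rational number r with 0 < r < 1/2 one has F(r,1−r) = 2^{4−12r} · csc(πr) · F(1−r, 3/2−2r). -/

import Mathlib

/-- The Pochhammer symbol (x)_k = x(x+1)⋯(x+k−1). -/
noncomputable def poch (x : ℝ) (k : ℕ) : ℝ := ∏ i ∈ Finset.range k, (x + i)

/-- The hypergeometric series ₃F₂(a1,a2,a3;b1,b2;1). -/
noncomputable def threeF2 (a1 a2 a3 b1 b2 : ℝ) : ℝ :=
  ∑' k : ℕ, poch a1 k * poch a2 k * poch a3 k /
    (poch b1 k * poch b2 k * (Nat.factorial k : ℝ))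

/-- The Beta function B(a,b) = Γ(a)Γ(b)/Γ(a+b). -/
noncomputable def betaFn (a b : ℝ) : ℝ :=
  Real.Gamma a * Real.Gamma b / Real.Gamma (a + b)

/-- The normalized hypergeometric value
F(r,s) = (2^{1−4r}·B(r,s−r)/N(r)) · ₃F₂(1/2,1/2,r;1,s;1), where N(r) = 2·den(r). -/
noncomputable def Fval (r s : ℚ) : ℝ :=
  (2:ℝ) ^ ((1:ℝ) - 4 * (r:ℝ)) * betaFn (r:ℝ) ((s:ℝ) - (r:ℝ)) / (2 * (r.den : ℝ)) *
    threeF2 (1/2) (1/2) (r:ℝ) 1 (s:ℝ)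

open MeasureTheory Set

lemma poch_succ (x : ℝ) (k : ℕ) : poch x (k + 1) = poch x k * (x + k) :=
  Finset.prod_range_succ _ _

lemma poch_pos {x : ℝ} (hx : 0 < x) (k : ℕ) : 0 < poch x k :=
  Finset.prod_pos fun _ _ => by positivity

lemma Gamma_add_natCast {x : ℝ} (hx : 0 < x) (k : ℕ) :
    Real.Gamma (x + k) = poch x k * Real.Gamma x := by
  induction k with
  | zero => simp [poch]
  | succ k ih =>
    rw [Nat.cast_succ, ← add_assoc, Real.Gamma_add_one (by positivity), ih, poch_succ]
    ring

lemma poch_eq_ascPochhammer_eval (x : ℝ) (k : ℕ) : poch x k = (ascPochhammer ℝ k).eval x := by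
  induction k with
  | zero => simp [poch]
  | succ k ih => rw [poch_succ, ascPochhammer_succ_eval, ih]

lemma betaFn_pos {a b : ℝ} (ha : 0 < a) (hb : 0 < b) : 0 < betaFn a b :=
  ProbabilityTheory.beta_pos ha hb

lemma betaFn_comm (a b : ℝ) : betaFn a b = betaFn b a := by
  rw [betaFn, betaFn, mul_comm, add_comm]

lemma betaFn_add_natCast {a b : ℝ} (ha : 0 < a) (hb : 0 < b) (k : ℕ) :
    betaFn (a + k) b = betaFn a b * (poch a k / poch (a + b) k) := by
  rw [betaFn, betaFn, add_right_comm, Gamma_add_natCast ha, Gamma_add_natCast (by positivity)]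
  have := poch_pos (add_pos ha hb) k
  have := Real.Gamma_pos_of_pos (add_pos ha hb)
  field_simp

lemma lintegral_rpow_mul_one_sub_rpow {a b : ℝ} (ha : 0 < a) (hb : 0 < b) :
    ∫⁻ x in Ioo (0 : ℝ) 1, ENNReal.ofReal (x ^ (a - 1) * (1 - x) ^ (b - 1)) =
      ENNReal.ofReal (betaFn a b) := by
  have hB : 0 < ProbabilityTheory.beta a b := betaFn_pos ha hb
  have h := ProbabilityTheory.lintegral_betaPDF_eq_one ha hb
  rw [ProbabilityTheory.lintegral_betaPDF] at h
  simp_rw [mul_assoc] at h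
  simp_rw [ENNReal.ofReal_mul (one_div_pos.2 hB).le] at h
  rw [lintegral_const_mul _ (by fun_prop), one_div, ENNReal.ofReal_inv_of_pos hB, mul_comm,
    ← div_eq_mul_inv, ENNReal.div_eq_one_iff (by simpa using hB) ENNReal.ofReal_ne_top] at h
  exact h

/-- Integrating a power series with nonnegative coefficients against a beta weight. -/
lemma lintegral_beta_mul_tsum {a b : ℝ} (ha : 0 < a) (hb : 0 < b) (c : ℕ → ℝ)
    (hc : ∀ k, 0 ≤ c k) :
    ∫⁻ x in Ioo (0 : ℝ) 1, ENNReal.ofReal (x ^ (a - 1) * (1 - x) ^ (b - 1)) *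
        ∑' k, ENNReal.ofReal (c k * x ^ k) =
      ENNReal.ofReal (betaFn a b) *
        ∑' k, ENNReal.ofReal (c k * (poch a k / poch (a + b) k)) := by
  simp_rw [← ENNReal.tsum_mul_left]
  rw [lintegral_tsum fun k => by fun_prop]
  refine tsum_congr fun k => ?_
  rw [← ENNReal.ofReal_mul (betaFn_pos ha hb).le, mul_left_comm, ← betaFn_add_natCast ha hb,
    ENNReal.ofReal_mul (hc k), ← lintegral_rpow_mul_one_sub_rpow (by positivity) hb,
    ← lintegral_const_mul _ (by fun_prop)]
  refine setLIntegral_congr_fun measurableSet_Ioo fun x hx => ?_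
  have h0 : 0 < x := hx.1
  have h1 : 0 < 1 - x := sub_pos.2 hx.2
  have := hc k
  rw [← ENNReal.ofReal_mul (by positivity), ← ENNReal.ofReal_mul (hc k),
    add_sub_right_comm, Real.rpow_add h0, Real.rpow_natCast]
  congr 1
  ring

lemma hasSum_poch_mul_pow (a : ℝ) {x : ℝ} (hx0 : 0 ≤ x) (hx1 : x < 1) :
    HasSum (fun k : ℕ => poch a k / k.factorial * x ^ k) ((1 - x) ^ (-a)) := by
  have h := (Real.one_div_one_sub_rpow_hasFPowerSeriesOnBall_zero a).hasSum
    (y := x) (by simpa [enorm_eq_nnnorm, ← NNReal.coe_lt_coe, abs_of_nonneg hx0] using hx1)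
  rw [zero_add, one_div, ← Real.rpow_neg (sub_pos.2 hx1).le] at h
  convert! h using 2 with k
  have hk := Ring.factorial_nsmul_multichoose_eq_ascPochhammer a k
  rw [Ring.multichoose_eq, Polynomial.ascPochhammer_smeval_eq_eval, ← poch_eq_ascPochhammer_eval,
    nsmul_eq_mul] at hk
  rw [← hk]
  have := k.factorial_pos
  simp
  field_simp

lemma tsum_ofReal_poch_mul_pow {a x : ℝ} (ha : 0 < a) (hx0 : 0 ≤ x) (hx1 : x < 1) :
    ∑' k : ℕ, ENNReal.ofReal (poch a k / k.factorial * x ^ k) =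
      ENNReal.ofReal ((1 - x) ^ (-a)) := by
  have h := hasSum_poch_mul_pow a hx0 hx1
  rw [← h.tsum_eq, ENNReal.ofReal_tsum_of_nonneg _ h.summable]
  intro k
  have := poch_pos ha k
  positivity

/-- The Gauss series ₂F₁(a,b;c;t) for nonnegative terms, with values in `[0, ∞]`. -/
noncomputable def gaussSeries (a b c t : ℝ) : ENNReal :=
  ∑' k : ℕ, ENNReal.ofReal (poch a k * poch b k / (poch c k * k.factorial) * t ^ k)

/-- Euler's integral representation of ₂F₁. -/
lemma betaFn_mul_gaussSeries {a b c t : ℝ} (ha : 0 < a) (hb : 0 < b) (hbc : b < c)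
    (ht0 : 0 < t) (ht1 : t < 1) :
    ENNReal.ofReal (betaFn b (c - b)) * gaussSeries a b c t =
      ∫⁻ x in Ioo (0 : ℝ) 1,
        ENNReal.ofReal (x ^ (b - 1) * (1 - x) ^ (c - b - 1) * (1 - t * x) ^ (-a)) := by
  have h := lintegral_beta_mul_tsum hb (sub_pos.2 hbc)
    (fun k => poch a k / k.factorial * t ^ k)
    (fun k => by have := poch_pos ha k; positivity)
  rw [add_sub_cancel] at h
  rw [gaussSeries]
  convert h.symm using 1
  · congr 2 with k
    congr 1
    ring
  · refine setLIntegral_congr_fun measurableSet_Ioo fun x hx => ?_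
    have h0 : 0 < x := hx.1
    have h1 : 0 < 1 - x := sub_pos.2 hx.2
    simp only [mul_assoc, ← mul_pow]
    rw [← mul_assoc, ENNReal.ofReal_mul (by positivity),
      tsum_ofReal_poch_mul_pow ha (by positivity) (by nlinarith)]

/-- The involution `y ↦ (1 - y) / (1 - t y)` of the unit interval. -/
lemma lintegral_euler_substitution {a b c t : ℝ} (ht0 : 0 < t) (ht1 : t < 1) :
    ∫⁻ x in Ioo (0 : ℝ) 1,
        ENNReal.ofReal (x ^ (b - 1) * (1 - x) ^ (c - b - 1) * (1 - t * x) ^ (-a)) =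
      ENNReal.ofReal ((1 - t) ^ (c - a - b)) * ∫⁻ x in Ioo (0 : ℝ) 1,
        ENNReal.ofReal (x ^ (c - b - 1) * (1 - x) ^ (b - 1) * (1 - t * x) ^ (a - c)) := by
  set f : ℝ → ℝ := fun y => (1 - y) / (1 - t * y)
  have hpos : ∀ y ∈ Ioo (0 : ℝ) 1, 0 < 1 - t * y := fun y hy => by nlinarith [hy.1, hy.2]
  have hmem : ∀ y ∈ Ioo (0 : ℝ) 1, f y ∈ Ioo (0 : ℝ) 1 := fun y hy =>
    ⟨div_pos (sub_pos.2 hy.2) (hpos y hy), (div_lt_one (hpos y hy)).2 (by nlinarith [hy.1])⟩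
  have hsub : ∀ y ∈ Ioo (0 : ℝ) 1, 1 - f y = y * (1 - t) / (1 - t * y) := fun y hy => by
    rw [eq_div_iff (hpos y hy).ne', sub_mul, div_mul_cancel₀ _ (hpos y hy).ne']
    ring
  have hsub' : ∀ y ∈ Ioo (0 : ℝ) 1, 1 - t * f y = (1 - t) / (1 - t * y) := fun y hy => by
    rw [eq_div_iff (hpos y hy).ne', sub_mul, mul_assoc, div_mul_cancel₀ _ (hpos y hy).ne']
    ring
  have hinv : ∀ y ∈ Ioo (0 : ℝ) 1, f (f y) = y := fun y hy => by
    have h1 := (hpos y hy).ne'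
    have h2 := (sub_pos.2 ht1).ne'
    change (1 - f y) / (1 - t * f y) = y
    rw [hsub y hy, hsub' y hy, div_div_div_cancel_right₀ h1, mul_div_cancel_right₀ _ h2]
  have himg : f '' Ioo 0 1 = Ioo 0 1 :=
    Subset.antisymm (image_subset_iff.2 hmem) fun y hy => ⟨f y, hmem y hy, hinv y hy⟩
  have hinj : InjOn f (Ioo 0 1) := fun x hx y hy h => by rw [← hinv x hx, h, hinv y hy]
  have hderiv : ∀ y ∈ Ioo (0 : ℝ) 1,
      HasDerivWithinAt f (-(1 - t) / (1 - t * y) ^ 2) (Ioo 0 1) y := fun y hy => by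
    have h1 : HasDerivAt (fun y : ℝ => 1 - y) (-1) y := by
      simpa using (hasDerivAt_id y).const_sub 1
    have h2 : HasDerivAt (fun y : ℝ => 1 - t * y) (-t) y := by
      simpa using ((hasDerivAt_id y).const_mul t).const_sub 1
    refine ((h1.div h2 (hpos y hy).ne').congr_deriv ?_).hasDerivWithinAt
    ring
  conv_lhs => rw [← himg]
  rw [lintegral_image_eq_lintegral_abs_deriv_mul measurableSet_Ioo hderiv hinj,
    ← lintegral_const_mul _ (by fun_prop)]
  refine setLIntegral_congr_fun measurableSet_Ioo fun y hy => ?_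
  have h0 : 0 < y := hy.1
  have h1 : 0 < 1 - y := sub_pos.2 hy.2
  have ht : 0 < 1 - t := sub_pos.2 ht1
  have hp := hpos y hy
  rw [← ENNReal.ofReal_mul (by positivity), ← ENNReal.ofReal_mul (by positivity), hsub y hy,
    hsub' y hy, neg_div, abs_neg, abs_of_pos (by positivity)]
  simp only [f]
  congr 1
  rw [Real.div_rpow h1.le hp.le, Real.div_rpow (by positivity) hp.le, Real.div_rpow ht.le hp.le,
    Real.mul_rpow h0.le ht.le]
  have k1 : (1 - t) ^ (c - a - b) = (1 - t) * (1 - t) ^ (c - b - 1) * (1 - t) ^ (-a) := by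
    nth_rewrite 2 [← Real.rpow_one (1 - t)]
    rw [← Real.rpow_add ht, ← Real.rpow_add ht]
    ring_nf
  have k2 : (1 - t * y) ^ (b - 1) * (1 - t * y) ^ (c - b - 1) * (1 - t * y) ^ (-a) *
      (1 - t * y) ^ 2 * (1 - t * y) ^ (a - c) = 1 := by
    rw [← Real.rpow_natCast, ← Real.rpow_add hp, ← Real.rpow_add hp, ← Real.rpow_add hp,
      ← Real.rpow_add hp]
    convert Real.rpow_zero _ using 2
    push_cast
    ring
  rw [k1]
  field_simp
  linear_combination (-1 : ℝ) * k2

/-- Euler's transformation of ₂F₁. -/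
lemma gaussSeries_euler {a b c t : ℝ} (ha : 0 < a) (hac : a < c) (hb : 0 < b) (hbc : b < c)
    (ht0 : 0 < t) (ht1 : t < 1) :
    gaussSeries a b c t =
      ENNReal.ofReal ((1 - t) ^ (c - a - b)) * gaussSeries (c - a) (c - b) c t := by
  have hB : ENNReal.ofReal (betaFn b (c - b)) ≠ 0 := by
    simpa using betaFn_pos hb (sub_pos.2 hbc)
  refine (ENNReal.mul_right_inj hB ENNReal.ofReal_ne_top).1 ?_
  rw [betaFn_mul_gaussSeries ha hb hbc ht0 ht1, lintegral_euler_substitution ht0 ht1,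
    mul_left_comm, betaFn_comm]
  have h := betaFn_mul_gaussSeries (sub_pos.2 hac) (sub_pos.2 hbc) (sub_lt_self c hb) ht0 ht1
  rw [sub_sub_cancel, neg_sub] at h
  rw [h]

lemma toReal_tsum_ofReal_eq_threeF2 {a b c d e : ℝ} (ha : 0 < a) (hb : 0 < b) (hc : 0 < c)
    (hd : 0 < d) (he : 0 < e) :
    (∑' k : ℕ, ENNReal.ofReal (poch b k * poch c k / (poch d k * k.factorial) *
      (poch a k / poch e k))).toReal = threeF2 b c a d e := by
  rw [ENNReal.tsum_toReal_eq fun _ => ENNReal.ofReal_ne_top, threeF2]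
  refine tsum_congr fun k => ?_
  have := poch_pos ha k
  have := poch_pos hb k
  have := poch_pos hc k
  have := poch_pos hd k
  have := poch_pos he k
  rw [ENNReal.toReal_ofReal (by positivity)]
  field_simp

/-- Kummer's transformation of ₃F₂(1), for parameters making all terms positive. -/
theorem betaFn_mul_threeF2_kummer {a b c d e : ℝ} (ha : 0 < a) (hae : a < e) (hb : 0 < b)
    (hbd : b < d) (hc : 0 < c) (hcd : c < d) (h : a + b + c < d + e) :
    betaFn a (e - a) * threeF2 b c a d e =
      betaFn a (d + e - a - b - c) * threeF2 (d - b) (d - c) a d (d + e - b - c) := by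
  have hd : 0 < d := hb.trans hbd
  have hea : 0 < e - a := sub_pos.2 hae
  have hs : 0 < d + e - a - b - c := by linarith
  have key : ∀ {b c s : ℝ}, 0 < b → 0 < c → 0 < s →
      betaFn a s * threeF2 b c a d (a + s) = (∫⁻ t in Ioo (0 : ℝ) 1,
        ENNReal.ofReal (t ^ (a - 1) * (1 - t) ^ (s - 1)) * gaussSeries b c d t).toReal := by
    intro b c s hb hc hs
    simp only [gaussSeries]
    rw [lintegral_beta_mul_tsum ha hs (fun k => poch b k * poch c k / (poch d k * k.factorial)),
      ENNReal.toReal_mul, ENNReal.toReal_ofReal (betaFn_pos ha hs).le,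
      toReal_tsum_ofReal_eq_threeF2 ha hb hc hd (by positivity)]
    intro k
    have := poch_pos hb k
    have := poch_pos hc k
    have := poch_pos hd k
    positivity
  have h1 := key hb hc hea
  have h2 := key (sub_pos.2 hbd) (sub_pos.2 hcd) hs
  rw [show a + (e - a) = e by ring] at h1
  rw [show a + (d + e - a - b - c) = d + e - b - c by ring] at h2
  rw [h1, h2]
  congr 1
  refine setLIntegral_congr_fun measurableSet_Ioo fun t ht => ?_
  have ht0 : 0 < t := ht.1
  have ht1 : 0 < 1 - t := sub_pos.2 ht.2
  rw [gaussSeries_euler hb hbd hc hcd ht.1 ht.2, ← mul_assoc, ← ENNReal.ofReal_mul (by positivity),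
    mul_assoc, ← Real.rpow_add ht1]
  ring_nf

lemma threeF2_rotate (a b c d e : ℝ) : threeF2 a b c d e = threeF2 b c a d e := by
  simp only [threeF2]
  congr 1 with k
  ring

/-- F(r,1−r) = 2^{4−12r}·csc(πr)·F(1−r, 3/2−2r) for 0 < r < 1/2. -/
theorem kummer_s_eq_one_sub_r (r : ℚ) (hr0 : 0 < r) (hr1 : r < 1/2) :
    Fval r (1 - r) = (2:ℝ) ^ ((4:ℝ) - 12 * (r:ℝ)) * (1 / Real.sin (Real.pi * (r:ℝ))) *
      Fval (1 - r) (3/2 - 2*r) := by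
  have hden : (1 - r).den = r.den := by exact_mod_cast Rat.intCast_sub_den 1 r
  have hd0 : (0 : ℝ) < r.den := by exact_mod_cast r.den_pos
  simp only [Fval, hden]
  push_cast
  have h0 : (0 : ℝ) < r := by exact_mod_cast hr0
  have h1 : (r : ℝ) < 1 / 2 := by
    have : (r : ℝ) < ((1 / 2 : ℚ) : ℝ) := by exact_mod_cast hr1
    simpa using this
  generalize (r : ℝ) = x at h0 h1 ⊢
  have hk := betaFn_mul_threeF2_kummer (a := 1 / 2) (b := 1 / 2) (c := x) (d := 1) (e := 1 - x)
    (by norm_num) (by linarith) (by norm_num) (by norm_num) h0 (by linarith) (by linarith)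
  rw [← threeF2_rotate (1 / 2), ← threeF2_rotate (1 / 2)] at hk
  have e1 : (1 : ℝ) - 1 / 2 = 1 / 2 := by norm_num
  have e2 : 1 + (1 - x) - 1 / 2 - x = 3 / 2 - 2 * x := by ring
  have e3 : 1 + (1 - x) - 1 / 2 - 1 / 2 - x = 1 - 2 * x := by ring
  rw [e1, e2, e3] at hk
  have hdup := Real.Gamma_mul_Gamma_add_half (1 / 2 - x)
  have hrefl := Real.Gamma_mul_Gamma_one_sub x
  have hw : Real.Gamma (1 / 2 + (1 - 2 * x)) = Real.Gamma (3 / 2 - 2 * x) := by ring_nf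
  have hg : 0 < Real.Gamma x := Real.Gamma_pos_of_pos h0
  have hh : 0 < Real.Gamma (1 - x) := Real.Gamma_pos_of_pos (by linarith)
  have hp : 0 < Real.Gamma (1 / 2 - x) := Real.Gamma_pos_of_pos (by linarith)
  have hq : 0 < Real.Gamma (1 - 2 * x) := Real.Gamma_pos_of_pos (by linarith)
  have hw0 : 0 < Real.Gamma (3 / 2 - 2 * x) := Real.Gamma_pos_of_pos (by linarith)
  have hu : (0 : ℝ) < 2 ^ (2 * x) := by positivity
  have hpi := Real.sqrt_pos.2 Real.pi_pos
  have hsq := Real.sq_sqrt Real.pi_pos.le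
  have hsin : 1 / Real.sin (Real.pi * x) = Real.Gamma x * Real.Gamma (1 - x) / Real.pi := by
    rw [hrefl]
    field_simp
  have p1 : (2 : ℝ) ^ (1 - 4 * x) = 2 / (2 ^ (2 * x)) ^ 2 := by
    rw [← Real.rpow_mul_natCast (by norm_num), Real.rpow_sub (by norm_num), Real.rpow_one]
    push_cast
    ring_nf
  have p2 : (2 : ℝ) ^ (4 - 12 * x) = 16 / (2 ^ (2 * x)) ^ 6 := by
    rw [← Real.rpow_mul_natCast (by norm_num), Real.rpow_sub (by norm_num)]
    norm_num
    ring_nf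
  have p3 : (2 : ℝ) ^ (1 - 4 * (1 - x)) = (2 ^ (2 * x)) ^ 2 / 8 := by
    rw [← Real.rpow_mul_natCast (by norm_num), show 1 - 4 * (1 - x) = 2 * x * 2 - 3 by ring,
      Real.rpow_sub (by norm_num)]
    norm_num
  rw [show 1 / 2 - x + 1 / 2 = 1 - x by ring, show 2 * (1 / 2 - x) = 1 - 2 * x by ring,
    show 1 - (1 - 2 * x) = 2 * x by ring] at hdup
  rw [betaFn, betaFn, Real.Gamma_one_half_eq, hw, show 1 - x - 1 / 2 = 1 / 2 - x by ring,
    show 1 / 2 + (1 / 2 - x) = 1 - x by ring] at hk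
  rw [hsin, p1, p2, p3, betaFn, betaFn, show 1 - x - x = 1 - 2 * x by ring,
    show x + (1 - 2 * x) = 1 - x by ring, show 3 / 2 - 2 * x - (1 - x) = 1 / 2 - x by ring,
    show 1 - x + (1 / 2 - x) = 3 / 2 - 2 * x by ring]
  generalize threeF2 (1 / 2) (1 / 2) x 1 (1 - x) = S at hk ⊢
  generalize threeF2 (1 / 2) (1 / 2) (1 - x) 1 (3 / 2 - 2 * x) = T at hk ⊢
  generalize Real.Gamma x = g at *
  generalize Real.Gamma (1 - x) = h at *
  generalize Real.Gamma (1 / 2 - x) = p at *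
  generalize Real.Gamma (1 - 2 * x) = q at *
  generalize Real.Gamma (3 / 2 - 2 * x) = w at *
  generalize (2 : ℝ) ^ (2 * x) = u at *
  have hS : S = q * h * T / (w * p) := by
    field_simp at hk ⊢
    linear_combination hk
  have hsq2 : p ^ 2 * h ^ 2 = q ^ 2 * u ^ 2 * Real.pi := by
    rw [← hsq, ← mul_pow, hdup]
    ring
  rw [hS]
  have := Real.pi_pos
  field_simp
  linear_combination -16 * T * hsq2
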